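/- Let k be a field and Λ ⊆ O a 4-dimensional k-subspace of the split octonions on which the norm Q vanishes identically. Then there exists a nonzero x ∈ O with Q(x) = 0 such that Λ = L(x) or Λ = R(x). -/

import Mathlib

/-!
A totally isotropic `Λ` acts on `O ⊕ O` through the half-spin representation of the Clifford
algebra of `Q`: `w` sends `(s, t)` to `(w * t, conj w * s)`. Elements of `Λ` act by pairwise
anticommuting operators of square zero, so they have a common nonzero null vector: if `v ≠ 0` is
killed by `e₁, …, eⱼ` and `e * v ≠ 0`, then `e * v` is killed by `e₁, …, eⱼ, e`
(`exists_killed_finset`). Thus some `v ≠ 0` satisfies either `w * v = 0` for all `w ∈ Λ`, or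
`conj w * v = 0` for all `w ∈ Λ`.

In the second case choose `u` with `⟨v, u⟩ = 1`. The linearized identity
`v * (conj u * w) + u * (conj v * w) = ⟨v, u⟩ w`, in which `conj v * w = conj (conj w * v) = 0`,
gives `w = v * (conj u * w)`, so `Λ ⊆ L(v)`. Since `Q(v * y) = Q(v) Q(y) = 0`, the space `L(v)` is
totally isotropic, and a 4-dimensional totally isotropic subspace is maximal with this property
(`eq_of_le_isotropic`), so `Λ = L(v)`. The first case gives `Λ = R(conj v)` symmetrically.
-/


open Matrix

/-- 2×2 matrices over `R`. -/
abbrev M2 (R : Type*) := Matrix (Fin 2) (Fin 2) R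

/-- The split octonions over `R`: pairs of 2×2 matrices. -/
abbrev Oct (R : Type*) := M2 R × M2 R

variable {R : Type*} [CommRing R]

/-- Octonion multiplication (Cayley–Dickson on 2×2 matrices). -/
def omul (x y : Oct R) : Oct R :=
  (x.1 * y.1 - y.2.adjugate * x.2, x.2 * y.1.adjugate + y.2 * x.1)

/-- Octonion conjugation. -/
def oconj (x : Oct R) : Oct R := (x.1.adjugate, -x.2)

/-- The norm of a split octonion. -/
def oQ (x : Oct R) : R := x.1.det + x.2.det

/-- The associated bilinear form. -/
def obil (x y : Oct R) : R := oQ (x + y) - oQ x - oQ y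

lemma adj_add (A B : M2 R) : (A + B).adjugate = A.adjugate + B.adjugate := by
  ext i j
  fin_cases i <;> fin_cases j <;>
    simp [Matrix.adjugate_fin_two] <;> ring

lemma adj_smul (c : R) (A : M2 R) : (c • A).adjugate = c • A.adjugate := by
  rw [Matrix.adjugate_smul]
  norm_num

/-- Left multiplication by `z` as a linear map. -/
def Lmap (z : Oct R) : Oct R →ₗ[R] Oct R where
  toFun w := omul z w
  map_add' a b := by
    simp only [omul, Prod.fst_add, Prod.snd_add, adj_add, Prod.mk_add_mk]
    rw [Prod.ext_iff]
    constructor <;> dsimp only <;> noncomm_ring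
  map_smul' c a := by
    simp only [omul, Prod.smul_fst, Prod.smul_snd, adj_smul, RingHom.id_apply, Prod.smul_mk]
    rw [Prod.ext_iff]
    constructor <;> dsimp only <;>
      simp [Matrix.mul_smul, Matrix.smul_mul, smul_sub]

/-- Right multiplication by `z` as a linear map. -/
def Rmap (z : Oct R) : Oct R →ₗ[R] Oct R where
  toFun w := omul w z
  map_add' a b := by
    simp only [omul, Prod.fst_add, Prod.snd_add, Prod.mk_add_mk]
    rw [Prod.ext_iff]
    constructor <;> dsimp only <;> noncomm_ring
  map_smul' c a := by
    simp only [omul, Prod.smul_fst, Prod.smul_snd, RingHom.id_apply, Prod.smul_mk]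
    rw [Prod.ext_iff]
    constructor <;> dsimp only <;>
      simp [Matrix.mul_smul, Matrix.smul_mul, smul_sub]

/-- `L(z)`: the range of left multiplication by `z`. -/
def Lsub (z : Oct R) : Submodule R (Oct R) := LinearMap.range (Lmap z)

/-- `R(z)`: the range of right multiplication by `z`. -/
def Rsub (z : Oct R) : Submodule R (Oct R) := LinearMap.range (Rmap z)

lemma oct_ext {S : Type*} {x y : Oct S} (h1 : ∀ i j, x.1 i j = y.1 i j)
    (h2 : ∀ i j, x.2 i j = y.2 i j) : x = y :=
  Prod.ext (Matrix.ext h1) (Matrix.ext h2)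

/-- Linearization of `a * (conj a * v) = Q(a) v`. -/
lemma mul_conj_mul_add (a b v : Oct R) :
    omul a (omul (oconj b) v) + omul b (omul (oconj a) v) = obil a b • v := by
  apply oct_ext <;> intro i j <;> fin_cases i <;> fin_cases j <;>
    simp [omul, oconj, oQ, obil, Matrix.adjugate_fin_two, Matrix.det_fin_two, Matrix.mul_apply,
      Fin.sum_univ_two, Matrix.vecMul, dotProduct] <;> ring

/-- Linearization of `conj a * (a * v) = Q(a) v`. -/
lemma conj_mul_mul_add (a b v : Oct R) :
    omul (oconj a) (omul b v) + omul (oconj b) (omul a v) = obil a b • v := by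
  apply oct_ext <;> intro i j <;> fin_cases i <;> fin_cases j <;>
    simp [omul, oconj, oQ, obil, Matrix.adjugate_fin_two, Matrix.det_fin_two, Matrix.mul_apply,
      Fin.sum_univ_two, Matrix.vecMul, dotProduct] <;> ring

/-- Linearization of `(w * x) * conj x = Q(x) w`. -/
lemma mul_mul_conj_add (w x u : Oct R) :
    omul (omul w u) (oconj x) + omul (omul w x) (oconj u) = obil x u • w := by
  apply oct_ext <;> intro i j <;> fin_cases i <;> fin_cases j <;>
    simp [omul, oconj, oQ, obil, Matrix.adjugate_fin_two, Matrix.det_fin_two, Matrix.mul_apply,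
      Fin.sum_univ_two, Matrix.vecMul, dotProduct] <;> ring

lemma mul_conj_mul (a v : Oct R) : omul a (omul (oconj a) v) = oQ a • v := by
  apply oct_ext <;> intro i j <;> fin_cases i <;> fin_cases j <;>
    simp [omul, oconj, oQ, Matrix.adjugate_fin_two, Matrix.det_fin_two, Matrix.mul_apply,
      Fin.sum_univ_two, Matrix.vecMul, dotProduct] <;> ring

lemma conj_mul_mul (a v : Oct R) : omul (oconj a) (omul a v) = oQ a • v := by
  apply oct_ext <;> intro i j <;> fin_cases i <;> fin_cases j <;>
    simp [omul, oconj, oQ, Matrix.adjugate_fin_two, Matrix.det_fin_two, Matrix.mul_apply,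
      Fin.sum_univ_two, Matrix.vecMul, dotProduct] <;> ring

lemma mul_mul_conj (w x : Oct R) : omul (omul w x) (oconj x) = oQ x • w := by
  apply oct_ext <;> intro i j <;> fin_cases i <;> fin_cases j <;>
    simp [omul, oconj, oQ, Matrix.adjugate_fin_two, Matrix.det_fin_two, Matrix.mul_apply,
      Fin.sum_univ_two, Matrix.vecMul, dotProduct] <;> ring

lemma oconj_omul (a b : Oct R) : oconj (omul (oconj a) b) = omul (oconj b) a := by
  apply oct_ext <;> intro i j <;> fin_cases i <;> fin_cases j <;>
    simp [omul, oconj, Matrix.adjugate_fin_two, Matrix.mul_apply,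
      Fin.sum_univ_two, Matrix.vecMul, dotProduct] <;> ring

lemma oconj_oconj (a : Oct R) : oconj (oconj a) = a := by
  apply oct_ext <;> intro i j <;> fin_cases i <;> fin_cases j <;>
    simp [oconj, Matrix.adjugate_fin_two]

lemma oconj_zero : oconj (0 : Oct R) = 0 := by
  apply oct_ext <;> intro i j <;> fin_cases i <;> fin_cases j <;>
    simp [oconj]

lemma oQ_oconj (a : Oct R) : oQ (oconj a) = oQ a := by
  simp [oQ, oconj, Matrix.adjugate_fin_two, Matrix.det_fin_two]
  ring

lemma oQ_omul (a b : Oct R) : oQ (omul a b) = oQ a * oQ b := by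
  simp [omul, oQ, Matrix.adjugate_fin_two, Matrix.det_fin_two, Matrix.mul_apply,
    Fin.sum_univ_two, Matrix.vecMul, dotProduct]
  ring

lemma omul_zero (a : Oct R) : omul a 0 = 0 := (Lmap a).map_zero

lemma zero_omul (a : Oct R) : omul 0 a = 0 := (Rmap a).map_zero

/-- The polar form of the octonion norm, bundled as a bilinear form. -/
def obilForm (k : Type*) [Field k] : LinearMap.BilinForm k (Oct k) :=
  LinearMap.mk₂ k obil
    (fun a b c => by simp [obil, oQ, Matrix.det_fin_two]; ring)
    (fun c a b => by simp [obil, oQ, Matrix.det_fin_two]; ring)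
    (fun a b c => by simp [obil, oQ, Matrix.det_fin_two]; ring)
    (fun c a b => by simp [obil, oQ, Matrix.det_fin_two]; ring)

lemma obil_comm (a b : Oct R) : obil a b = obil b a := by
  simp only [obil, add_comm a b]; ring

/-- Each coordinate of `x` is, up to sign, the pairing of `x` with a matrix unit. -/
lemma eq_zero_of_obil {x : Oct R} (h : ∀ u, obil x u = 0) : x = 0 := by
  have h1 := h (!![1, 0; 0, 0], 0)
  have h2 := h (!![0, 1; 0, 0], 0)
  have h3 := h (!![0, 0; 1, 0], 0)
  have h4 := h (!![0, 0; 0, 1], 0)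
  have h5 := h (0, !![1, 0; 0, 0])
  have h6 := h (0, !![0, 1; 0, 0])
  have h7 := h (0, !![0, 0; 1, 0])
  have h8 := h (0, !![0, 0; 0, 1])
  simp [obil, oQ, Matrix.det_fin_two] at h1 h2 h3 h4 h5 h6 h7 h8
  apply oct_ext <;> intro i j <;> fin_cases i <;> fin_cases j <;> simp <;> grind

section

variable {k : Type*} [Field k]

lemma exists_obil_eq_one {x : Oct k} (hx : x ≠ 0) : ∃ u, obil x u = 1 := by
  by_contra! hc
  refine hx (eq_zero_of_obil fun u => ?_)
  by_contra hu
  refine hc ((obil x u)⁻¹ • u) ?_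
  have : obil x ((obil x u)⁻¹ • u) = (obil x u)⁻¹ * obil x u :=
    (obilForm k x).map_smul _ u
  rw [this, inv_mul_cancel₀ hu]

lemma obil_eq_zero {W : Submodule k (Oct k)} (hW : ∀ w ∈ W, oQ w = 0) {a b : Oct k}
    (ha : a ∈ W) (hb : b ∈ W) : obil a b = 0 := by
  simp [obil, hW _ ha, hW _ hb, hW _ (W.add_mem ha hb)]

lemma obilForm_refl : (obilForm k).IsRefl := fun a b h => (obil_comm b a).trans h

lemma obilForm_nondegenerate : (obilForm k).Nondegenerate :=
  ⟨fun _ h => eq_zero_of_obil h,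
    fun x h => eq_zero_of_obil fun u => (obil_comm x u).trans (h u)⟩

/-- A 4-dimensional subspace contained in a totally isotropic `W` is all of `W`: it equals its own
orthogonal complement, which contains `W`. -/
lemma eq_of_le_isotropic {Λ W : Submodule k (Oct k)} (h4 : Module.finrank k ↥Λ = 4)
    (hle : Λ ≤ W) (hW : ∀ w ∈ W, oQ w = 0) : Λ = W := by
  have hWo : W ≤ (obilForm k).orthogonal Λ := fun y hy w hw =>
    obil_eq_zero hW (hle hw) hy
  have hdim := LinearMap.BilinForm.finrank_orthogonal obilForm_nondegenerate Λ
  have h8 : Module.finrank k (Oct k) = 8 := by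
    simp [Module.finrank_prod, Module.finrank_matrix]
  have h := Submodule.eq_of_le_of_finrank_eq (hle.trans hWo) (by omega)
  exact le_antisymm hle (h ▸ hWo)

/-- A common null vector, in one of the two half-spin representations, for finitely many elements
of a totally isotropic subspace. -/
lemma exists_killed_finset {Λ : Submodule k (Oct k)} (hQ : ∀ w ∈ Λ, oQ w = 0)
    (S : Finset (Oct k)) (hS : ∀ w ∈ S, w ∈ Λ) :
    ∃ v : Oct k, v ≠ 0 ∧ ((∀ w ∈ S, omul w v = 0) ∨ (∀ w ∈ S, omul (oconj w) v = 0)) := by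
  classical
  induction S using Finset.induction_on with
  | empty => exact ⟨(1, 0), by simp, by simp⟩
  | insert e S _ ih =>
    obtain ⟨v, hv, h⟩ := ih fun w hw => hS w (Finset.mem_insert_of_mem hw)
    have he := hS e (Finset.mem_insert_self e S)
    have hb : ∀ w ∈ S, obil w e = 0 := fun w hw =>
      obil_eq_zero hQ (hS w (Finset.mem_insert_of_mem hw)) he
    rcases h with h | h
    · by_cases hz : omul e v = 0
      · exact ⟨v, hv, Or.inl (by simpa [hz] using h)⟩
      · refine ⟨omul e v, hz, Or.inr ?_⟩
        simp only [Finset.forall_mem_insert, conj_mul_mul, hQ e he, zero_smul, true_and]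
        intro w hw
        simpa [h w hw, hb w hw, omul_zero] using conj_mul_mul_add w e v
    · by_cases hz : omul (oconj e) v = 0
      · exact ⟨v, hv, Or.inr (by simpa [hz] using h)⟩
      · refine ⟨omul (oconj e) v, hz, Or.inl ?_⟩
        simp only [Finset.forall_mem_insert, mul_conj_mul, hQ e he, zero_smul, true_and]
        intro w hw
        simpa [h w hw, hb w hw, omul_zero] using mul_conj_mul_add w e v

/-- The conclusion of `exists_killed_finset` for all of `Λ`, with the second alternative
conjugated. -/
lemma exists_killed {Λ : Submodule k (Oct k)} (hQ : ∀ w ∈ Λ, oQ w = 0) :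
    ∃ v : Oct k, v ≠ 0 ∧ ((∀ w ∈ Λ, omul w v = 0) ∨ (∀ w ∈ Λ, omul (oconj v) w = 0)) := by
  obtain ⟨S, hS⟩ := IsNoetherian.noetherian Λ
  obtain ⟨v, hv, h⟩ := exists_killed_finset hQ S fun w hw => hS ▸ Submodule.subset_span hw
  refine ⟨v, hv, h.imp (fun h => ?_) (fun h => ?_)⟩
  · have : Λ ≤ LinearMap.ker (Rmap v) := hS ▸ Submodule.span_le.2 h
    exact fun w hw => this hw
  · have : Λ ≤ LinearMap.ker (Lmap (oconj v)) := by
      refine hS ▸ Submodule.span_le.2 fun w hw => ?_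
      change omul (oconj v) w = 0
      rw [← oconj_omul, h w hw, oconj_zero]
    exact fun w hw => this hw

end

theorem stmt6 (k : Type*) [Field k] (Λ : Submodule k (Oct k))
    (h4 : Module.finrank k ↥Λ = 4) (hQ : ∀ w ∈ Λ, oQ w = 0) :
    ∃ x : Oct k, x ≠ 0 ∧ oQ x = 0 ∧ (Λ = Lsub x ∨ Λ = Rsub x) := by
  obtain ⟨v, hv, h⟩ := exists_killed hQ
  obtain ⟨u, hu⟩ := exists_obil_eq_one hv
  have hne : Λ ≠ ⊥ := by
    rintro rfl
    simp at h4
  obtain ⟨w₀, hw₀, hw₀0⟩ := Submodule.exists_mem_ne_zero_of_ne_bot hne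
  rcases h with h | h
  · have hQv : oQ v = 0 := by
      have := mul_mul_conj w₀ v
      rw [h w₀ hw₀, zero_omul] at this
      exact (smul_eq_zero.1 this.symm).resolve_right hw₀0
    refine ⟨oconj v, fun h0 => hv ?_, (oQ_oconj v).trans hQv, Or.inr ?_⟩
    · rw [← oconj_oconj v, h0, oconj_zero]
    · refine eq_of_le_isotropic h4 (fun w hw => ⟨omul w u, ?_⟩) ?_
      · simpa [Rmap, h w hw, hu, zero_omul] using mul_mul_conj_add w v u
      · rintro _ ⟨y, rfl⟩
        exact (oQ_omul y _).trans (by rw [oQ_oconj, hQv, mul_zero])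
  · have hQv : oQ v = 0 := by
      have := mul_conj_mul v w₀
      rw [h w₀ hw₀, omul_zero] at this
      exact (smul_eq_zero.1 this.symm).resolve_right hw₀0
    refine ⟨v, hv, hQv, Or.inl ?_⟩
    refine eq_of_le_isotropic h4 (fun w hw => ⟨omul (oconj u) w, ?_⟩) ?_
    · simpa [Lmap, h w hw, hu, omul_zero] using mul_conj_mul_add v u w
    · rintro _ ⟨y, rfl⟩
      exact (oQ_omul v y).trans (by rw [hQv, zero_mul])
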